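/- There exist α ∈ (0, 1/2) and C > 0 such that the following holds. Let s satisfy (1 − α)/2 < s < 1/2, let (εₙ) be a sequence of positive reals with εₙ → 0, and for each n let θₙ be a classical solution of the regularized fractional Burgers equation with viscosity εₙ on ℝ × [−1, 0] with |θₙ| ≤ 1 on ℝ × [−1, 0]. If u : ℝ → ℝ is such that θₙ(x, 0) → u(x) for Lebesgue-almost every x ∈ ℝ, then u agrees almost everywhere with a function v satisfying |v(x) − v(y)| ≤ C|x − y|^α for all x, y ∈ ℝ. -/

import Mathlib

open MeasureTheory Real Set Filter

/-- The normalizing constant of the 1-D fractional Laplacian. -/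
noncomputable def fracC (s : ℝ) : ℝ :=
  (4 : ℝ) ^ s * Real.Gamma (1 / 2 + s) / (Real.sqrt Real.pi * |Real.Gamma (-s)|)

/-- The fractional Laplacian `(-Δ)^s u (x)`. -/
noncomputable def fracLap (s : ℝ) (u : ℝ → ℝ) (x : ℝ) : ℝ :=
  fracC s * ∫ y : ℝ, (u x - u y) / |x - y| ^ (1 + 2 * s)

/-- A classical solution of the regularized fractional Burgers equation
`θ_t + θ θ_x + (-Δ)^s θ - ε₁ θ_xx = 0` on a set `D ⊆ ℝ × ℝ` (points written `(x, t)`):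
a bounded continuous function, continuously differentiable in `t` and twice continuously
differentiable in `x`, satisfying the equation at every point of `D`, where the fractional
Laplacian (acting in `x`) is given by an absolutely convergent integral. -/
structure IsClassicalSolution (s ε₁ : ℝ) (θ : ℝ → ℝ → ℝ) (D : Set (ℝ × ℝ)) : Prop where
  bounded : ∃ B : ℝ, ∀ p ∈ D, |θ p.1 p.2| ≤ B
  cont : ContinuousOn (fun p : ℝ × ℝ => θ p.1 p.2) D
  diff_t : ∀ p ∈ D, DifferentiableAt ℝ (fun t => θ p.1 t) p.2
  cont_dt : ContinuousOn (fun p : ℝ × ℝ => deriv (fun t => θ p.1 t) p.2) D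
  diff_x : ∀ p ∈ D, DifferentiableAt ℝ (fun x => θ x p.2) p.1
  diff_xx : ∀ p ∈ D, DifferentiableAt ℝ (deriv fun x => θ x p.2) p.1
  cont_dx : ContinuousOn (fun p : ℝ × ℝ => deriv (fun x => θ x p.2) p.1) D
  cont_dxx : ContinuousOn (fun p : ℝ × ℝ => deriv (deriv fun x => θ x p.2) p.1) D
  integrable : ∀ p ∈ D,
    Integrable fun y : ℝ => (θ p.1 p.2 - θ y p.2) / |p.1 - y| ^ (1 + 2 * s)
  eqn : ∀ p ∈ D,
    deriv (fun t => θ p.1 t) p.2 + θ p.1 p.2 * deriv (fun x => θ x p.2) p.1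
      + fracLap s (fun x => θ x p.2) p.1
      - ε₁ * deriv (deriv fun x => θ x p.2) p.1 = 0

/-- The fractional Laplacian constant stays away from zero as `s` increases to `1/2`. -/
lemma fracC_lower_bound :
    ∃ c η : ℝ, 0 < c ∧ 0 < η ∧ ∀ s : ℝ, 1 / 2 - η < s → s < 1 / 2 → c ≤ fracC s := by
  have hΓ : Gamma (-(1 / 2 : ℝ)) ≠ 0 := by
    refine Gamma_ne_zero fun m h => ?_
    have h2 : (m : ℝ) * 2 = 1 := by linarith
    have h3 : m * 2 = 1 := by exact_mod_cast h2
    omega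
  have hcont : ContinuousAt fracC (1 / 2) := by
    unfold fracC
    have h1 : ContinuousAt Gamma ((1 / 2 : ℝ) + 1 / 2) :=
      (differentiableAt_Gamma fun m h => by
        have : (0 : ℝ) ≤ m := m.cast_nonneg
        linarith).continuousAt
    have h2 : ContinuousAt Gamma (-(1 / 2 : ℝ)) :=
      (differentiableAt_Gamma fun m h => by
        have h2 : (m : ℝ) * 2 = 1 := by linarith
        have h3 : m * 2 = 1 := by exact_mod_cast h2
        omega).continuousAt
    have h1' : ContinuousAt (fun s : ℝ => Gamma (1 / 2 + s)) (1 / 2) :=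
      ContinuousAt.comp (f := fun s : ℝ => 1 / 2 + s) h1 (by fun_prop)
    have h2' : ContinuousAt (fun s : ℝ => Gamma (-s)) (1 / 2) :=
      ContinuousAt.comp (f := fun s : ℝ => -s) h2 (by fun_prop)
    have h3 : ContinuousAt (fun s : ℝ => (4 : ℝ) ^ s) (1 / 2) :=
      (Real.continuous_const_rpow (by norm_num)).continuousAt
    refine (h3.mul h1').div (continuousAt_const.mul h2'.abs) ?_
    exact mul_ne_zero (Real.sqrt_pos.2 pi_pos).ne' (abs_ne_zero.2 hΓ)
  have hpos : 0 < fracC (1 / 2) := by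
    unfold fracC
    have : 0 < Gamma ((1 / 2 : ℝ) + 1 / 2) := Gamma_pos_of_pos (by norm_num)
    have h3 := abs_pos.2 hΓ
    have h4 := Real.sqrt_pos.2 pi_pos
    positivity
  have hev := hcont.eventually (lt_mem_nhds (half_lt_self hpos))
  obtain ⟨η, hη, h⟩ := Metric.eventually_nhds_iff.1 hev
  refine ⟨fracC (1 / 2) / 2, η, by positivity, hη, fun s h1 h2 => (h ?_).le⟩
  rw [Real.dist_eq, abs_lt]
  constructor <;> linarith

/-- The odd kernel `h / |h| ^ (1 + 2 s)` is integrable on bounded symmetric intervals. -/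
lemma intervalIntegrable_odd_kernel {s : ℝ} (hs : s < 1 / 2) {a : ℝ} (ha : 0 < a) :
    IntervalIntegrable (fun h : ℝ => h / |h| ^ (1 + 2 * s)) volume (-a) a := by
  have h0 : IntervalIntegrable (fun h : ℝ => h / |h| ^ (1 + 2 * s)) volume 0 a := by
    refine (intervalIntegral.intervalIntegrable_rpow' (r := -(2 * s)) (by linarith)).congr ?_
    intro h hh
    rw [uIoc_of_le ha.le] at hh
    have hp : 0 < h := hh.1
    simp only
    rw [abs_of_pos hp, rpow_add hp, rpow_one, rpow_neg hp.le]
    field_simp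
  have h1 : IntervalIntegrable (fun h : ℝ => h / |h| ^ (1 + 2 * s)) volume (-a) 0 := by
    have := (h0.comp_sub_left 0).neg
    simp only [zero_sub, sub_zero] at this
    refine this.symm.congr ?_
    intro h _
    simp [neg_div]
  exact h1.trans h0

lemma integral_odd_kernel (s a : ℝ) :
    ∫ h in (-a)..a, h / |h| ^ (1 + 2 * s) = 0 := by
  have h := intervalIntegral.integral_comp_neg (a := -a) (b := a)
    (fun h : ℝ => h / |h| ^ (1 + 2 * s))
  simp only [abs_neg, neg_neg, neg_div, intervalIntegral.integral_neg] at h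
  linarith

/-- The fold of an integral over the line to the positive half-line. -/
lemma integral_eq_integral_indicator_fold {f : ℝ → ℝ} (hf : Integrable f) :
    Integrable ((Ioi (0 : ℝ)).indicator fun p => f p + f (-p)) ∧
      ∫ p, f p = ∫ p, (Ioi (0 : ℝ)).indicator (fun p => f p + f (-p)) p := by
  refine ⟨(hf.add hf.comp_neg).indicator measurableSet_Ioi, ?_⟩
  rw [integral_indicator measurableSet_Ioi,
    integral_add hf.integrableOn hf.comp_neg.integrableOn, integral_comp_neg_Ioi, neg_zero,
    add_comm]
  exact (intervalIntegral.integral_Iic_add_Ioi hf.integrableOn hf.integrableOn).symm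

/-- A concavity bound for the growth of small powers. -/
lemma one_add_rpow_le_sqrt {α τ : ℝ} (hα : 0 ≤ α) (hα' : α ≤ 1 / 2) (hτ : 0 ≤ τ) :
    (1 + τ) ^ α ≤ 1 + 2 * α * √τ := by
  have h1 : 1 + τ ≤ (1 + √τ) ^ (2 : ℝ) := by
    have h := Real.sq_sqrt hτ
    have h0 := Real.sqrt_nonneg τ
    rw [rpow_two]
    nlinarith
  calc (1 + τ) ^ α ≤ ((1 + √τ) ^ (2 : ℝ)) ^ α := rpow_le_rpow (by linarith) h1 hα
    _ = (1 + √τ) ^ (2 * α) := by rw [← rpow_mul (by positivity)]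
    _ ≤ 1 + 2 * α * √τ := rpow_one_add_le_one_add_mul_self
        (by linarith [Real.sqrt_nonneg τ]) (by linarith) (by linarith)

/-- Scaled comparison of `(2 p + r) ^ α` with `(2 a + r) ^ α`. -/
lemma rpow_affine_eq {α a r p : ℝ} (ha : 0 < a) (hr : 0 ≤ r) (hp : 0 ≤ p) :
    (2 * p + r) ^ α = (2 * a + r) ^ α * (1 + 2 * (p - a) / (2 * a + r)) ^ α := by
  have h : 0 < 2 * a + r := by positivity
  have h1 : 1 + 2 * (p - a) / (2 * a + r) = (2 * p + r) / (2 * a + r) := by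
    field_simp; ring
  rw [h1, ← mul_rpow h.le (by positivity)]
  congr 1
  field_simp

lemma rpow_affine_le_tangent {α a r p : ℝ} (hα : 0 ≤ α) (hα' : α ≤ 1) (ha : 0 < a)
    (hr : 0 ≤ r) (hp : 0 ≤ p) :
    (2 * p + r) ^ α ≤ (2 * a + r) ^ α * (1 + α * (2 / (2 * a + r)) * (p - a)) := by
  have h : 0 < 2 * a + r := by positivity
  rw [rpow_affine_eq ha hr hp]
  refine mul_le_mul_of_nonneg_left ?_ (by positivity)
  refine (rpow_one_add_le_one_add_mul_self ?_ hα hα').trans (le_of_eq ?_)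
  · rw [le_div_iff₀ h]; linarith
  · ring

lemma rpow_affine_le_sqrt {α a r p : ℝ} (hα : 0 ≤ α) (hα' : α ≤ 1 / 2) (ha : 0 < a)
    (hr : 0 ≤ r) (hp : a ≤ p) :
    (2 * p + r) ^ α ≤ (2 * a + r) ^ α * (1 + 2 * α * √((p - a) / a)) := by
  have h : 0 < 2 * a + r := by positivity
  have hpa : 0 ≤ p - a := by linarith
  rw [rpow_affine_eq ha hr (by linarith)]
  refine mul_le_mul_of_nonneg_left ?_ (by positivity)
  refine le_trans (rpow_le_rpow (by positivity) ?_ hα) (one_add_rpow_le_sqrt hα hα' (by positivity))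
  have : 2 * (p - a) / (2 * a + r) ≤ 2 * (p - a) / (2 * a) := by gcongr; linarith
  have h2 : 2 * (p - a) / (2 * a) = (p - a) / a := by field_simp
  linarith

set_option maxHeartbeats 800000 in
/-- Dissipation estimate: if `G` is dominated by the modulus `2 (2 p + r) ^ α + c`, with contact at
`a`, then its nonlocal increment at `a` is bounded below. -/
lemma dissipation_bound {s α r c a : ℝ} (hs : s < 1 / 2) (hsα : 2 * α ≤ (2 * s - 1 / 2) / 2)
    (hα : 0 < α) (hr : 0 ≤ r) (hc : 0 ≤ c) (ha : 0 < a) {G : ℝ → ℝ}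
    (hint : Integrable fun p => (G a - G p) / |a - p| ^ (1 + 2 * s))
    (hodd : ∀ p, 0 < p → G (-p) ≤ -G p)
    (hle : ∀ p, 0 < p → G p ≤ 2 * (2 * p + r) ^ α + c)
    (heq : G a = 2 * (2 * a + r) ^ α + c) :
    (2 * a + r) ^ α * a ^ (-(2 * s)) ≤ ∫ p, (G a - G p) / |a - p| ^ (1 + 2 * s) := by
  set Ω := (2 * a + r) ^ α with hΩ
  have har : 0 < 2 * a + r := by positivity
  have hΩ0 : 0 < Ω := by positivity
  have hs0 : 1 / 4 < s := by linarith
  have hα' : α ≤ 1 / 2 := by linarith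
  set φ₁ : ℝ → ℝ := (Ioc (-a) a).indicator fun h => h / |h| ^ (1 + 2 * s) with hφ₁
  set φ₂ : ℝ → ℝ := (Ioi a).indicator fun h => h ^ (-(1 / 2) - 2 * s) with hφ₂
  set φ₃ : ℝ → ℝ := (Ioi a).indicator fun h => h ^ (-1 - 2 * s) with hφ₃
  have i₁ : Integrable φ₁ := by
    have := intervalIntegrable_odd_kernel hs ha
    rw [intervalIntegrable_iff_integrableOn_Ioc_of_le (by linarith)] at this
    exact this.integrable_indicator measurableSet_Ioc
  have i₂ : Integrable φ₂ :=
    (integrableOn_Ioi_rpow_of_lt (by linarith) ha).integrable_indicator measurableSet_Ioi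
  have i₃ : Integrable φ₃ :=
    (integrableOn_Ioi_rpow_of_lt (by linarith) ha).integrable_indicator measurableSet_Ioi
  have v₁ : ∫ h, φ₁ h = 0 := by
    rw [hφ₁, integral_indicator measurableSet_Ioc,
      ← intervalIntegral.integral_of_le (by linarith), integral_odd_kernel]
  have v₂ : ∫ h, φ₂ h = a ^ (1 / 2 - 2 * s) / (2 * s - 1 / 2) := by
    rw [hφ₂, integral_indicator measurableSet_Ioi, integral_Ioi_rpow_of_lt (by linarith) ha,
      show -(1 / 2) - 2 * s + 1 = 1 / 2 - 2 * s by ring,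
      show 1 / 2 - 2 * s = -(2 * s - 1 / 2) by ring, neg_div_neg_eq]
  have v₃ : ∫ h, φ₃ h = a ^ (-(2 * s)) / (2 * s) := by
    rw [hφ₃, integral_indicator measurableSet_Ioi, integral_Ioi_rpow_of_lt (by linarith) ha,
      show -1 - 2 * s + 1 = -(2 * s) by ring, neg_div_neg_eq]
  set f : ℝ → ℝ := fun p => -((G a - G p) / |a - p| ^ (1 + 2 * s)) with hf
  obtain ⟨hfi, hfe⟩ := integral_eq_integral_indicator_fold (f := f) hint.neg
  set κ := 2 * Ω * (α * (2 / (2 * a + r))) with hκ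
  set μ := 2 * Ω * (2 * α * a ^ (-(1 / 2) : ℝ)) with hμ
  have j₁ : Integrable fun p => κ * φ₁ (p - a) := (i₁.comp_sub_right a).const_mul κ
  have j₂ : Integrable fun p => μ * φ₂ (p - a) := (i₂.comp_sub_right a).const_mul μ
  have j₃ : Integrable fun p => 2 * Ω * φ₃ (p + a) := (i₃.comp_add_right a).const_mul (2 * Ω)
  have key : ∀ p, (Ioi (0 : ℝ)).indicator (fun p => f p + f (-p)) p
      ≤ κ * φ₁ (p - a) + μ * φ₂ (p - a) - 2 * Ω * φ₃ (p + a) := by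
    intro p
    by_cases hp : 0 < p
    · rw [indicator_of_mem (show p ∈ Ioi (0 : ℝ) from hp)]
      have e₃ : φ₃ (p + a) = (|a + p| ^ (1 + 2 * s))⁻¹ := by
        rw [hφ₃, indicator_of_mem (show p + a ∈ Ioi a by simpa using hp),
          abs_of_pos (by linarith), ← rpow_neg (by linarith)]
        congr 1 <;> ring
      set k₁ := (|a - p| ^ (1 + 2 * s))⁻¹ with hk₁
      set k₂ := (|a + p| ^ (1 + 2 * s))⁻¹ with hk₂
      have hk₂0 : 0 ≤ k₂ := by positivity
      have hk₁0 : 0 ≤ k₁ := by positivity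
      set w := (2 * p + r) ^ α with hw
      have hw0 : 0 ≤ w := by positivity
      have hstep : f p + f (-p) ≤ 2 * (w - Ω) * k₁ - 2 * Ω * k₂ := by
        have e : f p + f (-p) = (G p - G a) * k₁ + (G (-p) - G a) * k₂ := by
          simp only [hf, hk₁, hk₂, sub_neg_eq_add]; ring
        rw [e]
        rcases eq_or_ne p a with rfl | hpa
        · have : k₁ = 0 := by
            rw [hk₁, sub_self, abs_zero, zero_rpow (by linarith), inv_zero]
          rw [this]
          nlinarith [hodd p hp]
        · have hk : k₂ ≤ k₁ := by
            rw [hk₁, hk₂]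
            have h1 : 0 < |a - p| := abs_pos.2 (sub_ne_zero.2 hpa.symm)
            have h2 : |a - p| ≤ |a + p| := by
              rw [abs_of_pos (show 0 < a + p by linarith), abs_le]; constructor <;> linarith
            exact inv_anti₀ (by positivity) (rpow_le_rpow h1.le h2 (by linarith))
          have h1 : (G (-p) - G a) * k₂ ≤ (-G p - G a) * k₂ :=
            mul_le_mul_of_nonneg_right (by linarith [hodd p hp]) hk₂0
          have h2 : (G p - G a) * (k₁ - k₂) ≤ (2 * w - 2 * Ω) * (k₁ - k₂) :=
            mul_le_mul_of_nonneg_right (by linarith [hle p hp]) (by linarith)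
          have h3 : 0 ≤ w * k₂ := by positivity
          have h4 : G a * k₂ = (2 * Ω + c) * k₂ := by rw [heq]
          have h5 : 0 ≤ c * k₂ := by positivity
          have h6 : 0 ≤ Ω * k₂ := by positivity
          nlinarith
      refine hstep.trans ?_
      rw [e₃]
      refine sub_le_sub_right ?_ _
      rcases le_or_gt p (2 * a) with h2 | h2
      · have e₁ : φ₁ (p - a) = (p - a) * k₁ := by
          rw [hφ₁, indicator_of_mem (show p - a ∈ Ioc (-a) a from ⟨by linarith, by linarith⟩),
            abs_sub_comm, hk₁, div_eq_mul_inv]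
        have e₂ : φ₂ (p - a) = 0 :=
          indicator_of_notMem (show p - a ∉ Ioi a by simp; linarith) _
        rw [e₁, e₂, mul_zero, add_zero, ← mul_assoc]
        refine mul_le_mul_of_nonneg_right ?_ hk₁0
        have := rpow_affine_le_tangent hα.le (by linarith) ha hr hp.le
        rw [hκ]
        linarith
      · have e₁ : φ₁ (p - a) = 0 :=
          indicator_of_notMem (show p - a ∉ Ioc (-a) a by simp; intros; linarith) _
        have hpa : 0 < p - a := by linarith
        have e₂ : a ^ (-(1 / 2) : ℝ) * φ₂ (p - a) = √((p - a) / a) * k₁ := by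
          rw [hφ₂, indicator_of_mem (show p - a ∈ Ioi a by simp; linarith), hk₁, abs_sub_comm,
            abs_of_pos hpa, Real.sqrt_div hpa.le, Real.sqrt_eq_rpow, Real.sqrt_eq_rpow,
            rpow_neg ha.le, ← rpow_neg hpa.le,
            show -(1 / 2) - 2 * s = 1 / 2 + -(1 + 2 * s) by ring, rpow_add hpa]
          ring
        have e₂' : μ * φ₂ (p - a) = 4 * Ω * α * (√((p - a) / a) * k₁) := by
          rw [← e₂, hμ]; ring
        rw [e₁, mul_zero, zero_add, e₂']
        have := rpow_affine_le_sqrt hα.le hα' ha hr (show a ≤ p by linarith)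
        have := mul_le_mul_of_nonneg_right this hk₁0
        linarith
    · rw [indicator_of_notMem (by simpa using hp), hφ₁, hφ₂, hφ₃,
        indicator_of_notMem (show p - a ∉ Ioc (-a) a by simp; intros; linarith),
        indicator_of_notMem (show p - a ∉ Ioi a by simp; linarith),
        indicator_of_notMem (show p + a ∉ Ioi a by simp; linarith)]
      simp
  have hmono := integral_mono hfi ((j₁.add j₂).sub j₃) key
  rw [← hfe, integral_sub' (j₁.add j₂) j₃, integral_add' j₁ j₂, integral_const_mul,
    integral_const_mul, integral_const_mul, integral_sub_right_eq_self,
    integral_sub_right_eq_self, integral_add_right_eq_self, v₁, v₂, v₃, hf, integral_neg] at hmono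
  have hprod : a ^ (-(1 / 2) : ℝ) * a ^ (1 / 2 - 2 * s) = a ^ (-(2 * s)) := by
    rw [← rpow_add ha]; congr 1; ring
  set X := a ^ (-(2 * s)) with hX
  have hX0 : 0 < X := by positivity
  have hb : μ * (a ^ (1 / 2 - 2 * s) / (2 * s - 1 / 2)) ≤ Ω * X := by
    have h1 : μ * (a ^ (1 / 2 - 2 * s) / (2 * s - 1 / 2))
        = Ω * X * (4 * α / (2 * s - 1 / 2)) := by
      rw [hμ, ← hprod]; ring
    rw [h1]
    refine mul_le_of_le_one_right (by positivity) ?_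
    rw [div_le_one (by linarith)]
    linarith
  have hd : X ≤ X / (2 * s) := by
    rw [le_div_iff₀ (by linarith)]; nlinarith
  have := mul_le_mul_of_nonneg_left hd hΩ0.le
  linarith

/-- The slowly growing penalty that localizes the comparison argument. -/
noncomputable def penalty (x : ℝ) : ℝ := log (1 + x ^ 2)

lemma penalty_nonneg (x : ℝ) : 0 ≤ penalty x :=
  log_nonneg (by nlinarith [sq_nonneg x])

lemma hasDerivAt_penalty (x : ℝ) : HasDerivAt penalty (2 * x / (1 + x ^ 2)) x := by
  have h : HasDerivAt (fun x : ℝ => 1 + x ^ 2) (2 * x) x := by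
    simpa using (hasDerivAt_pow 2 x).const_add 1
  exact h.log (by positivity)

lemma continuous_penalty : Continuous penalty :=
  continuous_iff_continuousAt.2 fun x => (hasDerivAt_penalty x).continuousAt

lemma deriv_penalty : deriv penalty = fun x => 2 * x / (1 + x ^ 2) :=
  funext fun x => (hasDerivAt_penalty x).deriv

lemma abs_deriv_penalty_le (x : ℝ) : |deriv penalty x| ≤ 1 := by
  rw [deriv_penalty, abs_le]
  have h : 0 < 1 + x ^ 2 := by positivity
  constructor
  · rw [le_div_iff₀ h]; nlinarith [sq_nonneg (x + 1)]
  · rw [div_le_iff₀ h]; nlinarith [sq_nonneg (x - 1)]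

lemma hasDerivAt_deriv_penalty (x : ℝ) :
    HasDerivAt (deriv penalty) ((2 - 2 * x ^ 2) / (1 + x ^ 2) ^ 2) x := by
  rw [deriv_penalty]
  have h : HasDerivAt (fun x : ℝ => 1 + x ^ 2) (2 * x) x := by
    simpa using (hasDerivAt_pow 2 x).const_add 1
  have h2 : HasDerivAt (fun x : ℝ => 2 * x) 2 x := by
    simpa using (hasDerivAt_id x).const_mul 2
  refine (h2.div h (by positivity)).congr_deriv ?_
  ring

lemma deriv_deriv_penalty_le (x : ℝ) : deriv (deriv penalty) x ≤ 2 := by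
  rw [(hasDerivAt_deriv_penalty x).deriv, div_le_iff₀ (by positivity)]
  nlinarith [sq_nonneg x, sq_nonneg (x ^ 2)]

lemma penalty_sub_le (x y : ℝ) : penalty x - penalty y ≤ 2 * log (1 + |x - y|) := by
  have h1 : (0 : ℝ) < 1 + y ^ 2 := by positivity
  have h2 : 0 < 1 + |x - y| := by positivity
  have hx : 1 + x ^ 2 ≤ (1 + y ^ 2) * (1 + |x - y|) ^ 2 := by
    set d := |x - y| with hd
    have hd0 : 0 ≤ d := abs_nonneg _
    have hxy : |x| ≤ |y| + d := by
      have := abs_add_le y (x - y)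
      simpa using this
    have h3 : x ^ 2 ≤ (|y| + d) ^ 2 := by
      rw [← sq_abs x]; exact pow_le_pow_left₀ (abs_nonneg x) hxy 2
    have hy := sq_abs y
    nlinarith [mul_nonneg hd0 (sq_nonneg (|y| - 1)), mul_nonneg hd0 hd0,
      mul_nonneg (mul_nonneg hd0 hd0) (sq_nonneg y)]
  have := log_le_log (by positivity) hx
  rw [log_mul h1.ne' (by positivity), log_pow] at this
  unfold penalty
  push_cast at this
  linarith

lemma abs_penalty_sub_le (x y : ℝ) : |penalty x - penalty y| ≤ 2 * log (1 + |x - y|) := by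
  rw [abs_le]
  have h1 := penalty_sub_le x y
  have h2 := penalty_sub_le y x
  rw [abs_sub_comm] at h2
  constructor <;> linarith

lemma integrable_log_kernel {s : ℝ} (hs : 1 / 4 < s) (hs' : s < 1 / 2) :
    Integrable fun h : ℝ => 2 * log (1 + |h|) / |h| ^ (1 + 2 * s) := by
  set J := fun h : ℝ => 2 * log (1 + |h|) / |h| ^ (1 + 2 * s) with hJ
  have hmeas : Measurable J := by
    rw [hJ]; fun_prop
  have hnn : ∀ h, 0 ≤ J h := fun h => by
    have : 0 ≤ log (1 + |h|) := log_nonneg (by linarith [abs_nonneg h])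
    simp only [hJ]; positivity
  have hpos : IntegrableOn J (Ioi 0) := by
    rw [← Ioc_union_Ioi_eq_Ioi (zero_le_one' ℝ)]
    refine IntegrableOn.union ?_ ?_
    · have h1 := intervalIntegral.intervalIntegrable_rpow' (a := 0) (b := 1) (r := -(2 * s))
        (by linarith)
      rw [intervalIntegrable_iff_integrableOn_Ioc_of_le zero_le_one] at h1
      refine (h1.const_mul 2).mono' hmeas.aestronglyMeasurable ?_
      filter_upwards [ae_restrict_mem measurableSet_Ioc] with h hh
      have hp : 0 < h := hh.1
      rw [Real.norm_of_nonneg (hnn h)]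
      simp only [hJ]
      rw [abs_of_pos hp, rpow_add hp, rpow_one, rpow_neg hp.le, div_le_iff₀ (by positivity)]
      have h3 := log_le_sub_one_of_pos (show 0 < 1 + h by linarith)
      have : 2 * (h ^ (2 * s))⁻¹ * (h * h ^ (2 * s)) = 2 * h := by
        field_simp
      rw [this]
      linarith
    · have h1 := integrableOn_Ioi_rpow_of_lt (a := -(1 / 2) - 2 * s) (by linarith) one_pos
      refine (h1.const_mul 4).mono' hmeas.aestronglyMeasurable ?_
      filter_upwards [ae_restrict_mem measurableSet_Ioi] with h hh
      have hp : 0 < h := lt_trans one_pos hh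
      rw [Real.norm_of_nonneg (hnn h)]
      simp only [hJ]
      rw [abs_of_pos hp, show -(1 / 2) - 2 * s = 1 / 2 + -(1 + 2 * s) by ring,
        rpow_add hp (1 / 2) (-(1 + 2 * s)), rpow_neg hp.le, ← Real.sqrt_eq_rpow, ← mul_assoc, div_eq_mul_inv]
      refine mul_le_mul_of_nonneg_right ?_ (by positivity)
      have hsq := Real.sq_sqrt hp.le
      have h0 := Real.sqrt_nonneg h
      have h3 := log_le_sub_one_of_pos (show 0 < 1 + √h by linarith)
      have h4 : log (1 + h) ≤ log ((1 + √h) ^ 2) := log_le_log (by linarith) (by nlinarith)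
      rw [log_pow] at h4
      push_cast at h4
      linarith
  have hneg : IntegrableOn J (Iic 0) := by
    rw [integrableOn_Iic_iff_integrableOn_Iio]
    have h1 : IntegrableOn (fun h => J (-h)) (Iio 0) := by
      apply IntegrableOn.comp_neg_Iio
      simpa using hpos
    simpa [hJ] using h1
  have := hneg.union hpos
  rwa [Iic_union_Ioi, integrableOn_univ] at this

/-- The penalty has a uniformly bounded fractional Laplacian. -/
lemma penalty_fracLap_bound {s : ℝ} (hs : 1 / 4 < s) (hs' : s < 1 / 2) :
    ∃ I : ℝ, 0 ≤ I ∧ ∀ x : ℝ,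
      Integrable (fun y => (penalty x - penalty y) / |x - y| ^ (1 + 2 * s)) ∧
      |∫ y, (penalty x - penalty y) / |x - y| ^ (1 + 2 * s)| ≤ I := by
  have hJ := integrable_log_kernel hs hs'
  refine ⟨∫ h : ℝ, 2 * log (1 + |h|) / |h| ^ (1 + 2 * s), integral_nonneg fun h => ?_,
    fun x => ?_⟩
  · have : 0 ≤ log (1 + |h|) := log_nonneg (by linarith [abs_nonneg h])
    simp only [Pi.zero_apply]; positivity
  · have hJx := hJ.comp_sub_left x
    have hb : ∀ y, ‖(penalty x - penalty y) / |x - y| ^ (1 + 2 * s)‖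
        ≤ 2 * log (1 + |x - y|) / |x - y| ^ (1 + 2 * s) := fun y => by
      rw [norm_div, Real.norm_eq_abs, Real.norm_of_nonneg (by positivity)]
      gcongr
      exact abs_penalty_sub_le x y
    have hm : Measurable penalty := continuous_penalty.measurable
    refine ⟨hJx.mono' (Measurable.aestronglyMeasurable (by fun_prop)) (ae_of_all _ hb), ?_⟩
    rw [← Real.norm_eq_abs]
    refine (norm_integral_le_of_norm_le hJx (ae_of_all _ hb)).trans (le_of_eq ?_)
    exact integral_sub_left_eq_self (fun h : ℝ => 2 * log (1 + |h|) / |h| ^ (1 + 2 * s)) volume x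

/-- The second derivative is nonpositive at a maximum. -/
lemma deriv_deriv_nonpos_of_isLocalMax {f : ℝ → ℝ} {x : ℝ} (hf : ContinuousAt f x)
    (hmax : IsLocalMax f x) : deriv (deriv f) x ≤ 0 := by
  by_contra! hpos
  have hmin := isLocalMin_of_deriv_deriv_pos hpos hmax.deriv_eq_zero hf
  have heq : f =ᶠ[nhds x] fun _ => f x := by
    filter_upwards [hmax, hmin] with y h1 h2 using le_antisymm h1 h2
  have hd : deriv f =ᶠ[nhds x] fun _ => 0 := by
    simpa using heq.deriv
  have := hd.deriv_eq
  simp at this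
  linarith

/-- The derivative is nonnegative at a point which is maximal among nearby smaller points. -/
lemma deriv_nonneg_of_left_max {f : ℝ → ℝ} {f' b t : ℝ} (hf : HasDerivAt f f' t) (hb : b < t)
    (hmax : ∀ y ∈ Ioo b t, f y ≤ f t) : 0 ≤ f' := by
  have h := (hasDerivAt_iff_tendsto_slope.1 hf).mono_left
    (nhdsWithin_mono t (show Iio t ⊆ {t}ᶜ from fun y hy => ne_of_lt hy))
  refine ge_of_tendsto h ?_
  filter_upwards [Ioo_mem_nhdsLT hb] with y hy
  rw [slope_def_field]
  exact div_nonneg_of_nonpos (by linarith [hmax y hy]) (by linarith [hy.2])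

/-- Affine isometric change of variables in an integral over the line. -/
lemma integral_comp_isometry {f : ℝ → ℝ} (hf : Integrable f) (m : ℝ) {σ : ℝ}
    (hσ : σ = 1 ∨ σ = -1) :
    Integrable (fun p => f (m + σ * p)) ∧ ∫ p, f (m + σ * p) = ∫ p, f p := by
  rcases hσ with rfl | rfl
  · simp only [one_mul]
    exact ⟨hf.comp_add_left m, integral_add_left_eq_self f m⟩
  · simp only [neg_mul, one_mul, ← sub_eq_add_neg]
    exact ⟨hf.comp_sub_left m, integral_sub_left_eq_self f volume m⟩

/-- Comparison of the nonlocal terms at a point of contact with the penalized modulus. -/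
lemma nonlocal_difference_at_contact {s α r c κ I x₀ y₀ : ℝ} (hs : s < 1 / 2)
    (hsα : 2 * α ≤ (2 * s - 1 / 2) / 2) (hα : 0 < α) (hr : 0 ≤ r) (hc : 0 ≤ c) (hκ : 0 ≤ κ)
    (hI : ∀ x : ℝ, Integrable (fun y => (penalty x - penalty y) / |x - y| ^ (1 + 2 * s)) ∧
      |∫ y, (penalty x - penalty y) / |x - y| ^ (1 + 2 * s)| ≤ I)
    {u : ℝ → ℝ} (hne : x₀ ≠ y₀)
    (hx : Integrable fun y => (u x₀ - u y) / |x₀ - y| ^ (1 + 2 * s))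
    (hy : Integrable fun y => (u y₀ - u y) / |y₀ - y| ^ (1 + 2 * s))
    (hle : ∀ p q, u p - u q ≤ 2 * (|p - q| + r) ^ α + c + κ * (penalty p + penalty q))
    (heq : u x₀ - u y₀ = 2 * (|x₀ - y₀| + r) ^ α + c + κ * (penalty x₀ + penalty y₀)) :
    (|x₀ - y₀| + r) ^ α * (|x₀ - y₀| / 2) ^ (-(2 * s)) - 2 * κ * I ≤
      (∫ y, (u x₀ - u y) / |x₀ - y| ^ (1 + 2 * s)) -
        ∫ y, (u y₀ - u y) / |y₀ - y| ^ (1 + 2 * s) := by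
  obtain ⟨σ, hσ, hσd⟩ : ∃ σ : ℝ, (σ = 1 ∨ σ = -1) ∧ x₀ - y₀ = σ * |x₀ - y₀| := by
    rcases abs_choice (x₀ - y₀) with h | h
    · exact ⟨1, Or.inl rfl, by linarith⟩
    · exact ⟨-1, Or.inr rfl, by linarith⟩
  have hσabs : |σ| = 1 := by rcases hσ with rfl | rfl <;> simp
  set a := |x₀ - y₀| / 2 with ha
  have ha0 : 0 < a := half_pos (abs_pos.2 (sub_ne_zero.2 hne))
  set m := (x₀ + y₀) / 2 with hm
  have hxm : x₀ = m + σ * a := by rw [hm, ha]; linarith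
  have hym : y₀ = m + (-σ) * a := by rw [hm, ha]; linarith
  have hξ : |x₀ - y₀| = 2 * a := by rw [ha]; ring
  obtain ⟨hPx, hPx'⟩ := hI x₀
  obtain ⟨hPy, hPy'⟩ := hI y₀
  set A : ℝ → ℝ := fun x => u x - κ * penalty x with hA
  set B : ℝ → ℝ := fun x => u x + κ * penalty x with hB
  have hAi : Integrable fun y => (A x₀ - A y) / |x₀ - y| ^ (1 + 2 * s) := by
    refine (hx.sub (hPx.const_mul κ)).congr (ae_of_all _ fun y => ?_)
    simp only [hA, Pi.sub_apply]; ring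
  have hBi : Integrable fun y => (B y₀ - B y) / |y₀ - y| ^ (1 + 2 * s) := by
    refine (hy.add (hPy.const_mul κ)).congr (ae_of_all _ fun y => ?_)
    simp only [hB, Pi.add_apply]; ring
  have hAv : ∫ y, (A x₀ - A y) / |x₀ - y| ^ (1 + 2 * s) =
      (∫ y, (u x₀ - u y) / |x₀ - y| ^ (1 + 2 * s)) -
        κ * ∫ y, (penalty x₀ - penalty y) / |x₀ - y| ^ (1 + 2 * s) := by
    rw [← integral_const_mul, ← integral_sub hx (hPx.const_mul κ)]
    congr 1; ext y; simp only [hA]; ring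
  have hBv : ∫ y, (B y₀ - B y) / |y₀ - y| ^ (1 + 2 * s) =
      (∫ y, (u y₀ - u y) / |y₀ - y| ^ (1 + 2 * s)) +
        κ * ∫ y, (penalty y₀ - penalty y) / |y₀ - y| ^ (1 + 2 * s) := by
    rw [← integral_const_mul, ← integral_add hy (hPy.const_mul κ)]
    congr 1; ext y; simp only [hB]; ring
  obtain ⟨hAi', hAv'⟩ := integral_comp_isometry hAi m hσ
  obtain ⟨hBi', hBv'⟩ := integral_comp_isometry hBi m
    (σ := -σ) (by rcases hσ with rfl | rfl <;> simp)
  have hdist : ∀ p, |x₀ - (m + σ * p)| = |a - p| := fun p => by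
    rw [hxm, show m + σ * a - (m + σ * p) = σ * (a - p) by ring, abs_mul, hσabs, one_mul]
  have hdist' : ∀ p, |y₀ - (m + (-σ) * p)| = |a - p| := fun p => by
    rw [hym, show m + (-σ) * a - (m + (-σ) * p) = (-σ) * (a - p) by ring, abs_mul, abs_neg,
      hσabs, one_mul]
  simp only [hdist] at hAi' hAv'
  simp only [hdist'] at hBi' hBv'
  set G : ℝ → ℝ := fun p => A (m + σ * p) - B (m + (-σ) * p) with hG
  have hGeq : ∀ p, (G a - G p) / |a - p| ^ (1 + 2 * s) =
      (A x₀ - A (m + σ * p)) / |a - p| ^ (1 + 2 * s) -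
        (B y₀ - B (m + (-σ) * p)) / |a - p| ^ (1 + 2 * s) := fun p => by
    simp only [hG]; rw [← hxm, ← hym]; ring
  have hGi : Integrable fun p => (G a - G p) / |a - p| ^ (1 + 2 * s) := by
    simp only [hGeq]; exact hAi'.sub hBi'
  have hdiss := dissipation_bound hs hsα hα hr hc ha0 hGi
    (fun p _ => by
      have h1 := mul_nonneg hκ (penalty_nonneg (m + σ * p))
      have h2 := mul_nonneg hκ (penalty_nonneg (m + (-σ) * p))
      simp only [hG, hA, hB, mul_neg, neg_mul, neg_neg] at *
      linarith)
    (fun p hp => by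
      have := hle (m + σ * p) (m + (-σ) * p)
      rw [show m + σ * p - (m + (-σ) * p) = σ * (2 * p) by ring, abs_mul, hσabs, one_mul,
        abs_of_pos (show 0 < 2 * p by linarith)] at this
      simp only [hG, hA, hB]
      linarith)
    (by
      simp only [hG]
      rw [← hxm, ← hym]
      simp only [hA, hB]
      rw [← hξ]
      linarith)
  have hGv : ∫ p, (G a - G p) / |a - p| ^ (1 + 2 * s) =
      (∫ y, (A x₀ - A y) / |x₀ - y| ^ (1 + 2 * s)) -
        ∫ y, (B y₀ - B y) / |y₀ - y| ^ (1 + 2 * s) := by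
    simp only [hGeq]
    rw [integral_sub hAi' hBi', hAv', hBv']
  rw [hGv, hAv, hBv] at hdiss
  rw [hξ]
  have h1 := mul_le_mul_of_nonneg_left (abs_le.1 hPx').1 hκ
  have h2 := mul_le_mul_of_nonneg_left (abs_le.1 hPy').1 hκ
  linarith

/-- The modulus is a supersolution of the comparison equation where it is below `2`. -/
lemma modulus_supersolution {s α r c ξ : ℝ} (hα : 0 < α) (hs : 1 / 4 < s) (hs' : s < 1 / 2)
    (hsα : 1 - α < 2 * s) (hc : 8 * α ≤ c) (hr : 0 < r) (hξ : 0 < ξ) (hle : ξ + r ≤ 1) :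
    2 * α * (ξ + r) ^ (α - 1) * (2 * (ξ + r) ^ α) +
      2 * α * (ξ + r) ^ (α - 1) * (1 / (2 * s) * r ^ (1 - 2 * s)) ≤
        c * ((ξ + r) ^ α * (ξ / 2) ^ (-(2 * s))) := by
  have hz : 0 < ξ + r := by positivity
  set Ω := (ξ + r) ^ α with hΩ
  set X := (ξ + r) ^ (-(2 * s)) with hX
  have hΩ0 : 0 < Ω := by positivity
  have hX0 : 0 < X := by positivity
  have h1 : (ξ + r) ^ (α - 1) ≤ X := rpow_le_rpow_of_exponent_ge hz hle (by linarith)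
  have h2 : (ξ + r) ^ (α - 1) * r ^ (1 - 2 * s) ≤ Ω * X := by
    have h3 : r ^ (1 - 2 * s) ≤ (ξ + r) ^ (1 - 2 * s) :=
      rpow_le_rpow hr.le (by linarith) (by linarith)
    refine (mul_le_mul_of_nonneg_left h3 (by positivity)).trans (le_of_eq ?_)
    rw [hΩ, hX, ← rpow_add hz, ← rpow_add hz]
    congr 1; ring
  have h4 : X ≤ (ξ / 2) ^ (-(2 * s)) := by
    rw [hX]
    exact rpow_le_rpow_of_nonpos (by positivity) (by linarith) (by linarith)
  have h5 : 1 / (2 * s) ≤ 2 := by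
    rw [div_le_iff₀ (by linarith)]; linarith
  have h6 : 2 * α * (ξ + r) ^ (α - 1) * (2 * Ω) ≤ 4 * α * (Ω * X) := by
    have := mul_le_mul_of_nonneg_left h1 (show 0 ≤ 4 * α * Ω by positivity)
    linarith
  have h7 : 2 * α * (ξ + r) ^ (α - 1) * (1 / (2 * s) * r ^ (1 - 2 * s)) ≤ 4 * α * (Ω * X) := by
    have e : 2 * α * (ξ + r) ^ (α - 1) * (1 / (2 * s) * r ^ (1 - 2 * s)) =
        2 * α * ((1 / (2 * s)) * ((ξ + r) ^ (α - 1) * r ^ (1 - 2 * s))) := by ring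
    have h8 : (1 / (2 * s)) * ((ξ + r) ^ (α - 1) * r ^ (1 - 2 * s)) ≤ 2 * (Ω * X) :=
      mul_le_mul h5 h2 (by positivity) (by norm_num)
    rw [e]
    have := mul_le_mul_of_nonneg_left h8 (show 0 ≤ 2 * α by positivity)
    linarith
  have h9 : 8 * α * (Ω * X) ≤ c * (Ω * X) := mul_le_mul_of_nonneg_right hc (by positivity)
  have h10 : c * (Ω * X) ≤ c * (Ω * (ξ / 2) ^ (-(2 * s))) := by
    have : 0 ≤ c := by linarith
    gcongr
  linarith

lemma hasDerivAt_modulus_space {α r ξ : ℝ} (h : 0 < ξ + r) :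
    HasDerivAt (fun ξ => 2 * (ξ + r) ^ α) (2 * α * (ξ + r) ^ (α - 1)) ξ := by
  have h1 : HasDerivAt (fun ξ : ℝ => ξ + r) 1 ξ := (hasDerivAt_id ξ).add_const r
  refine ((h1.rpow_const (p := α) (Or.inl h.ne')).const_mul 2).congr_deriv ?_
  ring

lemma hasDerivAt_modulus_time {s α ρ ξ t : ℝ} (hs : 0 < s) (hξ : 0 ≤ ξ) (ht : 0 < ρ - t) :
    HasDerivAt (fun t => 2 * (ξ + (ρ - t) ^ (1 / (2 * s))) ^ α)
      (-(2 * α * (ξ + (ρ - t) ^ (1 / (2 * s))) ^ (α - 1) *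
        (1 / (2 * s) * ((ρ - t) ^ (1 / (2 * s))) ^ (1 - 2 * s)))) t := by
  have h1 : HasDerivAt (fun t : ℝ => ρ - t) (-1) t := by
    simpa using (hasDerivAt_id t).const_sub ρ
  have h2 := (h1.rpow_const (p := 1 / (2 * s)) (Or.inl ht.ne')).const_add ξ
  have hpos : 0 < ξ + (ρ - t) ^ (1 / (2 * s)) := by positivity
  refine ((h2.rpow_const (p := α) (Or.inl hpos.ne')).const_mul 2).congr_deriv ?_
  rw [← rpow_mul ht.le, show 1 / (2 * s) * (1 - 2 * s) = 1 / (2 * s) - 1 by field_simp]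
  ring

/-- A penalized bounded function attains its maximum over `ℝ × ℝ × [-1, 0]`. -/
lemma exists_penalized_max {F : ℝ × ℝ × ℝ → ℝ} {δ : ℝ} (hδ : 0 < δ)
    (hF : ContinuousOn F (univ ×ˢ univ ×ˢ Icc (-1 : ℝ) 0))
    (hb : ∀ x y t, t ∈ Icc (-1 : ℝ) 0 → F (x, y, t) ≤ 2)
    {x₁ y₁ t₁ : ℝ} (ht₁ : t₁ ∈ Icc (-1 : ℝ) 0)
    (hpos : 0 < F (x₁, y₁, t₁) - δ * (penalty x₁ + penalty y₁)) :
    ∃ x₀ y₀ t₀, t₀ ∈ Icc (-1 : ℝ) 0 ∧ ∀ x y t, t ∈ Icc (-1 : ℝ) 0 →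
      F (x, y, t) - δ * (penalty x + penalty y) ≤
        F (x₀, y₀, t₀) - δ * (penalty x₀ + penalty y₀) := by
  set L := exp (1 / δ) with hL
  have hout : ∀ x, x ∉ Icc (-L) L → 2 ≤ δ * penalty x := by
    intro x hx
    have hLx : L < |x| := by
      by_contra! h
      exact hx (abs_le.1 h)
    have h1 : 2 / δ ≤ penalty x := by
      unfold penalty
      rw [le_log_iff_exp_le (by positivity)]
      have h2 : exp (2 / δ) = L ^ 2 := by
        rw [hL, ← exp_nat_mul]; congr 1; push_cast; ring
      rw [h2, ← sq_abs x]
      have : 0 < L := exp_pos _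
      nlinarith
    rw [div_le_iff₀ hδ] at h1
    linarith
  set S : Set (ℝ × ℝ × ℝ) := Icc (-L) L ×ˢ Icc (-L) L ×ˢ Icc (-1 : ℝ) 0 with hS
  have hScompact : IsCompact S := isCompact_Icc.prod (isCompact_Icc.prod isCompact_Icc)
  set Ψ : ℝ × ℝ × ℝ → ℝ := fun z => F z - δ * (penalty z.1 + penalty z.2.1) with hΨ
  have hΨc : ContinuousOn Ψ S := by
    refine ContinuousOn.sub (hF.mono ?_) ?_
    · rintro ⟨x, y, t⟩ ⟨_, _, h⟩
      exact ⟨mem_univ _, mem_univ _, h⟩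
    · have := continuous_penalty
      fun_prop
  have hin : ∀ x y t, t ∈ Icc (-1 : ℝ) 0 → 0 < Ψ (x, y, t) → (x, y, t) ∈ S := by
    intro x y t ht h
    have h1 := mul_nonneg hδ.le (penalty_nonneg x)
    have h2 := mul_nonneg hδ.le (penalty_nonneg y)
    have h3 := hb x y t ht
    simp only [hΨ] at h
    refine ⟨?_, ?_, ht⟩
    · by_contra hx
      have := hout x hx
      linarith
    · by_contra hy
      have := hout y hy
      linarith
  have h₁ := hin x₁ y₁ t₁ ht₁ hpos
  obtain ⟨⟨x₀, y₀, t₀⟩, h₀, hmax⟩ := hScompact.exists_isMaxOn ⟨_, h₁⟩ hΨc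
  refine ⟨x₀, y₀, t₀, h₀.2.2, fun x y t ht => ?_⟩
  by_cases h : 0 < Ψ (x, y, t)
  · exact hmax (hin x y t ht h)
  · exact (not_lt.1 h).trans (hpos.le.trans (hmax h₁))

/-- First-order conditions at a maximum of a penalized doubled function. -/
lemma first_order_at_contact {α r κ x₀ y₀ : ℝ} {u : ℝ → ℝ} (hr : 0 < r) (hu : Differentiable ℝ u)
    (hne : x₀ ≠ y₀)
    (hmax : ∀ p q, u p - u q - 2 * (|p - q| + r) ^ α - κ * (penalty p + penalty q) ≤
      u x₀ - u y₀ - 2 * (|x₀ - y₀| + r) ^ α - κ * (penalty x₀ + penalty y₀)) :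
    ∃ σ : ℝ, (σ = 1 ∨ σ = -1) ∧
      deriv u x₀ = σ * (2 * α * (|x₀ - y₀| + r) ^ (α - 1)) + κ * deriv penalty x₀ ∧
      deriv u y₀ = σ * (2 * α * (|x₀ - y₀| + r) ^ (α - 1)) - κ * deriv penalty y₀ := by
  have hd : x₀ - y₀ ≠ 0 := sub_ne_zero.2 hne
  obtain ⟨σ, hσ, habs⟩ : ∃ σ : ℝ, (σ = 1 ∨ σ = -1) ∧ HasDerivAt (fun x : ℝ => |x|) σ (x₀ - y₀) := by
    rcases lt_or_gt_of_ne hd with h | h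
    · exact ⟨-1, Or.inr rfl, hasDerivAt_abs_neg h⟩
    · exact ⟨1, Or.inl rfl, hasDerivAt_abs_pos h⟩
  have hpos : 0 < |x₀ - y₀| + r := by positivity
  have hω := hasDerivAt_modulus_space (α := α) hpos
  have hx : HasDerivAt (fun p => |p - y₀|) σ x₀ := habs.comp_sub_const x₀ y₀
  have hy : HasDerivAt (fun q => |x₀ - q|) (-σ) y₀ := habs.comp_const_sub x₀ y₀
  have hωx := HasDerivAt.comp (h := fun p => |p - y₀|) x₀ hω hx
  have hωy := HasDerivAt.comp (h := fun q => |x₀ - q|) y₀ hω hy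
  have hpx := (hasDerivAt_penalty x₀).differentiableAt.hasDerivAt
  have hpy := (hasDerivAt_penalty y₀).differentiableAt.hasDerivAt
  have hX := (((hu x₀).hasDerivAt.sub_const (u y₀)).sub hωx).sub
    ((hpx.add_const (penalty y₀)).const_mul κ)
  have hY := (((hu y₀).hasDerivAt.const_sub (u x₀)).sub hωy).sub
    ((hpy.const_add (penalty x₀)).const_mul κ)
  have hX0 := IsLocalMax.hasDerivAt_eq_zero (Eventually.of_forall fun p => hmax p y₀) hX
  have hY0 := IsLocalMax.hasDerivAt_eq_zero (Eventually.of_forall fun q => hmax x₀ q) hY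
  refine ⟨σ, hσ, by linarith, by linarith⟩

/-- Second-order condition at a maximum of a penalized doubled function. -/
lemma second_order_at_contact {α r κ x₀ y₀ : ℝ} {u : ℝ → ℝ} (hκ : 0 ≤ κ)
    (hu : Differentiable ℝ u) (hu' : Differentiable ℝ (deriv u))
    (hmax : ∀ p q, u p - u q - 2 * (|p - q| + r) ^ α - κ * (penalty p + penalty q) ≤
      u x₀ - u y₀ - 2 * (|x₀ - y₀| + r) ^ α - κ * (penalty x₀ + penalty y₀)) :
    deriv (deriv u) x₀ - deriv (deriv u) y₀ ≤ 4 * κ := by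
  set g : ℝ → ℝ := fun h => u (x₀ + h) - u (y₀ + h) -
    κ * (penalty (x₀ + h) + penalty (y₀ + h)) with hg
  have hg1 : ∀ h, HasDerivAt g (deriv u (x₀ + h) - deriv u (y₀ + h) -
      κ * (deriv penalty (x₀ + h) + deriv penalty (y₀ + h))) h := fun h =>
    (((hu _).hasDerivAt.comp_const_add x₀ h).sub ((hu _).hasDerivAt.comp_const_add y₀ h)).sub
      ((((hasDerivAt_penalty _).differentiableAt.hasDerivAt.comp_const_add x₀ h).add
        ((hasDerivAt_penalty _).differentiableAt.hasDerivAt.comp_const_add y₀ h)).const_mul κ)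
  have hg2 : HasDerivAt (deriv g) (deriv (deriv u) (x₀ + 0) - deriv (deriv u) (y₀ + 0) -
      κ * (deriv (deriv penalty) (x₀ + 0) + deriv (deriv penalty) (y₀ + 0))) 0 := by
    rw [show deriv g = _ from funext fun h => (hg1 h).deriv]
    exact (((hu' _).hasDerivAt.comp_const_add x₀ 0).sub
      ((hu' _).hasDerivAt.comp_const_add y₀ 0)).sub
      ((((hasDerivAt_deriv_penalty _).differentiableAt.hasDerivAt.comp_const_add x₀ 0).add
        ((hasDerivAt_deriv_penalty _).differentiableAt.hasDerivAt.comp_const_add y₀ 0)).const_mul κ)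
  have hloc : IsLocalMax g 0 := Eventually.of_forall fun h => by
    have := hmax (x₀ + h) (y₀ + h)
    rw [add_sub_add_right_eq_sub] at this
    simp only [hg, add_zero]
    linarith
  have h0 := deriv_deriv_nonpos_of_isLocalMax (hg1 0).continuousAt hloc
  rw [hg2.deriv] at h0
  simp only [add_zero] at h0
  have h1 := mul_le_mul_of_nonneg_left (deriv_deriv_penalty_le x₀) hκ
  have h2 := mul_le_mul_of_nonneg_left (deriv_deriv_penalty_le y₀) hκ
  linarith

set_option maxHeartbeats 1600000 in
/-- Solutions bounded by `1` obey a modulus of continuity that becomes Hölder at the final time. -/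
lemma IsClassicalSolution.modulus_comparison {s α ε₁ ρ : ℝ} {θ : ℝ → ℝ → ℝ} (hα : 0 < α)
    (hs : s < 1 / 2) (hs₁ : 1 - α < 2 * s) (hs₂ : 2 * α ≤ (2 * s - 1 / 2) / 2)
    (hC : 8 * α ≤ fracC s) (hε : 0 < ε₁) (hρ : 0 < ρ)
    (hsol : IsClassicalSolution s ε₁ θ (univ ×ˢ Icc (-1 : ℝ) 0))
    (hbd : ∀ x : ℝ, ∀ t ∈ Icc (-1 : ℝ) 0, |θ x t| ≤ 1) (x y t : ℝ) (ht : t ∈ Icc (-1 : ℝ) 0) :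
    θ x t - θ y t ≤ 2 * (|x - y| + (ρ - t) ^ (1 / (2 * s))) ^ α := by
  by_contra! hcon
  have hs0 : 1 / 4 < s := by linarith
  obtain ⟨I, hI0, hI⟩ := penalty_fracLap_bound hs0 hs
  set R : ℝ → ℝ := fun t => (ρ - t) ^ (1 / (2 * s)) with hR
  have hRpos : ∀ t ∈ Icc (-1 : ℝ) 0, 0 < R t := fun t ht =>
    rpow_pos_of_pos (by linarith [ht.2]) _
  have hR0 : ∀ t ∈ Icc (-1 : ℝ) 0, R 0 ≤ R t := fun t ht =>
    rpow_le_rpow (by linarith) (by linarith [ht.2]) (by positivity)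
  set F : ℝ → ℝ → ℝ → ℝ := fun x y t => θ x t - θ y t - 2 * (|x - y| + R t) ^ α with hF
  set K := 2 * α * R 0 ^ (α - 1) + 1 with hK
  have hz : (0 : ℝ) ∈ Icc (-1 : ℝ) 0 := ⟨by norm_num, le_rfl⟩
  have hK0 : 0 < K := by
    have := hRpos 0 hz
    positivity
  have hF2 : ∀ x y t, t ∈ Icc (-1 : ℝ) 0 → F x y t ≤ 2 := fun x y t ht => by
    have h1 := (abs_le.1 (hbd x t ht)).2
    have h2 := (abs_le.1 (hbd y t ht)).1
    have h3 := hRpos t ht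
    have h4 : 0 ≤ 2 * (|x - y| + R t) ^ α := by positivity
    simp only [hF]
    linarith
  have hFpos : 0 < F x y t := by simp only [hF, hR]; linarith
  set c₀ := F x y t * exp (-(K * (t + 1))) / 2 with hc₀
  have hc₀pos : 0 < c₀ := by positivity
  set M := 2 + 4 * ε₁ + 2 * fracC s * I with hM
  have hCpos : 0 < fracC s := by linarith
  have hMpos : 0 < M := by positivity
  have hpx := penalty_nonneg x
  have hpy := penalty_nonneg y
  set Q := penalty x + penalty y + exp K * M + 1 with hQ
  have hQpos : 0 < Q := by positivity
  set δ := c₀ / Q with hδ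
  have hδpos : 0 < δ := by positivity
  have hδQ : δ * Q = c₀ := by rw [hδ]; field_simp
  have hδ1 : δ * (penalty x + penalty y) ≤ c₀ := by
    rw [← hδQ]
    refine mul_le_mul_of_nonneg_left ?_ hδpos.le
    have : 0 < exp K * M := by positivity
    linarith
  have hδ2 : δ * (exp K * M) < c₀ := by
    rw [← hδQ]
    refine mul_lt_mul_of_pos_left ?_ hδpos
    linarith
  -- the maximum of the penalized functional
  have hθc : ContinuousOn (fun p : ℝ × ℝ => θ p.1 p.2) (univ ×ˢ Icc (-1 : ℝ) 0) := hsol.cont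
  have hcont : ContinuousOn (fun z : ℝ × ℝ × ℝ => F z.1 z.2.1 z.2.2 * exp (-(K * (z.2.2 + 1))))
      (univ ×ˢ univ ×ˢ Icc (-1 : ℝ) 0) := by
    have h1 : ContinuousOn (fun z : ℝ × ℝ × ℝ => θ z.1 z.2.2) (univ ×ˢ univ ×ˢ Icc (-1 : ℝ) 0) :=
      hθc.comp (f := fun z : ℝ × ℝ × ℝ => (z.1, z.2.2)) (by fun_prop)
        fun z hz => ⟨mem_univ _, hz.2.2⟩
    have h2 : ContinuousOn (fun z : ℝ × ℝ × ℝ => θ z.2.1 z.2.2)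
        (univ ×ˢ univ ×ˢ Icc (-1 : ℝ) 0) :=
      hθc.comp (f := fun z : ℝ × ℝ × ℝ => (z.2.1, z.2.2)) (by fun_prop)
        fun z hz => ⟨mem_univ _, hz.2.2⟩
    have h3 : Continuous fun z : ℝ × ℝ × ℝ => (|z.1 - z.2.1| + R z.2.2) ^ α := by
      refine Continuous.rpow_const (Continuous.add (by fun_prop) ?_) fun _ => Or.inr hα.le
      exact Continuous.rpow_const (by fun_prop) fun _ => Or.inr (by positivity)
    exact ((h1.sub h2).sub (continuous_const.mul h3).continuousOn).mul (by fun_prop)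
  obtain ⟨x₀, y₀, t₀, ht₀, hmax⟩ := exists_penalized_max hδpos hcont
    (fun x y t ht => by
      have h1 : exp (-(K * (t + 1))) ≤ 1 := by
        rw [exp_le_one_iff]
        have : 0 ≤ K * (t + 1) := mul_nonneg hK0.le (by linarith [ht.1])
        linarith
      have h2 := hF2 x y t ht
      have h3 := exp_pos (-(K * (t + 1)))
      simp only
      nlinarith) (x₁ := x) (y₁ := y) ht (by simp only; linarith)
  simp only at hmax
  set N := F x₀ y₀ t₀ * exp (-(K * (t₀ + 1))) - δ * (penalty x₀ + penalty y₀) with hN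
  have hNc : c₀ ≤ N := by
    have := hmax x y t ht
    linarith
  have hNpos : 0 < N := by linarith
  set E := exp (K * (t₀ + 1)) with hE
  have hE1 : 1 ≤ E := by
    rw [hE, one_le_exp_iff]
    exact mul_nonneg hK0.le (by linarith [ht₀.1])
  have hE2 : E ≤ exp K := by
    rw [hE, exp_le_exp]
    nlinarith [ht₀.2]
  have hEe : exp (-(K * (t₀ + 1))) * E = 1 := by
    rw [hE, ← exp_add]; simp
  have hEpos : 0 < E := by linarith
  set κ := E * δ with hκ
  have hκpos : 0 < κ := by positivity
  have hF₀ : F x₀ y₀ t₀ = E * N + κ * (penalty x₀ + penalty y₀) := by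
    rw [hN, hκ]; linear_combination -(F x₀ y₀ t₀) * hEe
  have hFle : ∀ p q, F p q t₀ ≤ E * N + κ * (penalty p + penalty q) := fun p q => by
    have h1 := mul_le_mul_of_nonneg_left (hmax p q t₀ ht₀) hEpos.le
    have h2 : E * (F p q t₀ * exp (-(K * (t₀ + 1))) - δ * (penalty p + penalty q)) =
        F p q t₀ - κ * (penalty p + penalty q) := by
      rw [hκ]; linear_combination (F p q t₀) * hEe
    linarith
  have hF₀c : c₀ ≤ F x₀ y₀ t₀ := by
    have h1 : 0 ≤ κ * (penalty x₀ + penalty y₀) :=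
      mul_nonneg hκpos.le (add_nonneg (penalty_nonneg _) (penalty_nonneg _))
    nlinarith
  have hF₀pos : 0 < F x₀ y₀ t₀ := by linarith
  -- location of the maximum
  set r := R t₀ with hr
  have hrpos : 0 < r := hRpos t₀ ht₀
  have hne : x₀ ≠ y₀ := by
    rintro rfl
    have h1 : 0 ≤ 2 * (|x₀ - x₀| + R t₀) ^ α := by positivity
    simp only [hF] at hF₀pos
    linarith
  set ξ := |x₀ - y₀| with hξ
  have hξpos : 0 < ξ := abs_pos.2 (sub_ne_zero.2 hne)
  have hθle : θ x₀ t₀ - θ y₀ t₀ ≤ 2 := by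
    have h1 := (abs_le.1 (hbd x₀ t₀ ht₀)).2
    have h2 := (abs_le.1 (hbd y₀ t₀ ht₀)).1
    linarith
  have hsmall : ξ + r < 1 := by
    by_contra! h
    have h1 : 1 ≤ (ξ + r) ^ α := one_le_rpow h hα.le
    simp only [hF] at hF₀pos
    linarith
  have ht₀' : -1 < t₀ := by
    rcases eq_or_lt_of_le ht₀.1 with h | h
    · exfalso
      have h1 : 1 ≤ r := one_le_rpow (by linarith) (by positivity)
      linarith
    · exact h
  have hdiff : θ x₀ t₀ - θ y₀ t₀ = 2 * (ξ + r) ^ α + F x₀ y₀ t₀ := by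
    simp only [hF]; ring
  -- consequences of maximality
  set u : ℝ → ℝ := fun x => θ x t₀ with hu
  have hD : ∀ x : ℝ, (x, t₀) ∈ univ ×ˢ Icc (-1 : ℝ) 0 := fun x => ⟨mem_univ _, ht₀⟩
  have hu1 : Differentiable ℝ u := fun x => hsol.diff_x (x, t₀) (hD x)
  have hu2 : Differentiable ℝ (deriv u) := fun x => hsol.diff_xx (x, t₀) (hD x)
  have humax : ∀ p q, u p - u q - 2 * (|p - q| + r) ^ α - κ * (penalty p + penalty q) ≤
      u x₀ - u y₀ - 2 * (|x₀ - y₀| + r) ^ α - κ * (penalty x₀ + penalty y₀) := fun p q => by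
    have h1 := hFle p q
    have h2 := hF₀
    simp only [hF] at h1 h2
    simp only [hu]
    linarith
  obtain ⟨σ, hσ, hux, huy⟩ := first_order_at_contact hrpos hu1 hne humax
  have huu := second_order_at_contact hκpos.le hu1 hu2 humax
  have hnl := nonlocal_difference_at_contact (u := u) (c := E * N) hs hs₂ hα hrpos.le
    (by positivity) hκpos.le hI hne (hsol.integrable (x₀, t₀) (hD x₀))
    (hsol.integrable (y₀, t₀) (hD y₀))
    (fun p q => by
      have := hFle p q
      simp only [hF] at this
      simp only [hu]
      linarith)
    (by
      have := hF₀
      simp only [hF] at this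
      simp only [hu]
      linarith)
  have htime : K * F x₀ y₀ t₀ ≤ deriv (fun t => θ x₀ t) t₀ - deriv (fun t => θ y₀ t) t₀ +
      2 * α * (ξ + r) ^ (α - 1) * (1 / (2 * s) * r ^ (1 - 2 * s)) := by
    have hω := hasDerivAt_modulus_time (s := s) (α := α) (ρ := ρ) (ξ := ξ) (t := t₀)
      (by linarith) hξpos.le (by linarith [ht₀.2])
    have hθx := (hsol.diff_t (x₀, t₀) (hD x₀)).hasDerivAt
    have hθy := (hsol.diff_t (y₀, t₀) (hD y₀)).hasDerivAt
    have hexp : HasDerivAt (fun t : ℝ => exp (-(K * (t + 1))))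
        (exp (-(K * (t₀ + 1))) * -(K * 1)) t₀ :=
      ((((hasDerivAt_id t₀).add_const 1).const_mul K).neg).exp
    have hder := (((hθx.sub hθy).sub hω).mul hexp).sub_const (δ * (penalty x₀ + penalty y₀))
    have h0 := deriv_nonneg_of_left_max hder ht₀'
      (fun t ht => hmax x₀ y₀ t ⟨ht.1.le, ht.2.le.trans ht₀.2⟩)
    have h1 := mul_nonneg h0 hEpos.le
    simp only [Pi.sub_apply] at h1
    change 0 ≤ ((deriv (fun t => θ x₀ t) t₀ - deriv (fun t => θ y₀ t) t₀ -
      -(2 * α * (ξ + r) ^ (α - 1) * (1 / (2 * s) * r ^ (1 - 2 * s)))) * exp (-(K * (t₀ + 1))) +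
      F x₀ y₀ t₀ * (exp (-(K * (t₀ + 1))) * -(K * 1))) * E at h1
    set D := deriv (fun t => θ x₀ t) t₀ - deriv (fun t => θ y₀ t) t₀ -
      -(2 * α * (ξ + r) ^ (α - 1) * (1 / (2 * s) * r ^ (1 - 2 * s))) with hDdef
    have h2 : (D * exp (-(K * (t₀ + 1))) +
        F x₀ y₀ t₀ * (exp (-(K * (t₀ + 1))) * -(K * 1))) * E = D - K * F x₀ y₀ t₀ := by
      linear_combination (D - K * F x₀ y₀ t₀) * hEe
    linarith
  -- the equation at the two contact points
  have ex := hsol.eqn (x₀, t₀) (hD x₀)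
  have ey := hsol.eqn (y₀, t₀) (hD y₀)
  simp only [fracLap] at ex ey
  change _ + u x₀ * deriv u x₀ + fracC s * (∫ y, (u x₀ - u y) / |x₀ - y| ^ (1 + 2 * s)) -
    ε₁ * deriv (deriv u) x₀ = 0 at ex
  change _ + u y₀ * deriv u y₀ + fracC s * (∫ y, (u y₀ - u y) / |y₀ - y| ^ (1 + 2 * s)) -
    ε₁ * deriv (deriv u) y₀ = 0 at ey
  have hnl' := mul_le_mul_of_nonneg_left hnl hCpos.le
  have hvisc := mul_le_mul_of_nonneg_left huu hε.le
  have hsuper := modulus_supersolution hα hs0 hs hs₁ hC hrpos hξpos hsmall.le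
  set ω' := 2 * α * (ξ + r) ^ (α - 1) with hω'
  have hω'0 : 0 ≤ ω' := by positivity
  have hω'K : ω' ≤ K - 1 := by
    rw [hω', hK, add_sub_cancel_right]
    refine mul_le_mul_of_nonneg_left ?_ (by positivity)
    exact rpow_le_rpow_of_nonpos (hRpos 0 hz) (by linarith [hR0 t₀ ht₀]) (by linarith)
  have hudiff : u x₀ - u y₀ = 2 * (ξ + r) ^ α + F x₀ y₀ t₀ := hdiff
  have hconv : -(σ * ω' * (u x₀ - u y₀)) ≤ ω' * (2 * (ξ + r) ^ α + F x₀ y₀ t₀) := by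
    rw [hudiff]
    have : 0 ≤ ω' * (2 * (ξ + r) ^ α + F x₀ y₀ t₀) := by positivity
    rcases hσ with rfl | rfl <;> linarith
  have hpen : ∀ z, -(u z * deriv penalty z) ≤ 1 := fun z => by
    have h1 : |u z * deriv penalty z| ≤ 1 := by
      rw [abs_mul]
      exact mul_le_one₀ (hbd z t₀ ht₀) (abs_nonneg _) (abs_deriv_penalty_le z)
    linarith [(abs_le.1 h1).1]
  have hp1 := mul_le_mul_of_nonneg_left (hpen x₀) hκpos.le
  have hp2 := mul_le_mul_of_nonneg_left (hpen y₀) hκpos.le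
  have hKF : ω' * F x₀ y₀ t₀ ≤ (K - 1) * F x₀ y₀ t₀ :=
    mul_le_mul_of_nonneg_right hω'K hF₀pos.le
  have hκM : κ * M < c₀ := by
    refine lt_of_le_of_lt ?_ hδ2
    have h1 : E * (δ * M) ≤ exp K * (δ * M) := mul_le_mul_of_nonneg_right hE2 (by positivity)
    rw [hκ]
    linarith
  have hfin : F x₀ y₀ t₀ ≤ κ * M := by
    rw [hux] at ex
    rw [huy] at ey
    rw [hM]
    linarith
  linarith

/-- A Hölder function on a nonempty set, bounded below there, extends to the line with the same
constant. -/
lemma exists_holder_extension {u : ℝ → ℝ} {S : Set ℝ} {C α B : ℝ} (hS : S.Nonempty) (hC : 0 ≤ C)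
    (hα : 0 < α) (hα' : α ≤ 1) (hB : ∀ x ∈ S, B ≤ u x)
    (hu : ∀ x ∈ S, ∀ y ∈ S, u x - u y ≤ C * |x - y| ^ α) :
    ∃ v : ℝ → ℝ, (∀ x y, |v x - v y| ≤ C * |x - y| ^ α) ∧ ∀ x ∈ S, u x = v x := by
  have : Nonempty S := hS.to_subtype
  have hbdd : ∀ x : ℝ, BddBelow (range fun z : S => u z + C * |x - (z : ℝ)| ^ α) := fun x => by
    refine ⟨B, ?_⟩
    rintro _ ⟨z, rfl⟩
    have h1 : 0 ≤ C * |x - (z : ℝ)| ^ α := by positivity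
    have := hB z z.2
    simp only
    linarith
  have hle : ∀ x y : ℝ, (⨅ z : S, u z + C * |x - (z : ℝ)| ^ α) - (⨅ z : S, u z + C * |y - (z : ℝ)| ^ α) ≤
      C * |x - y| ^ α := fun x y => by
    rw [sub_le_comm]
    refine le_ciInf fun z => ?_
    have h1 := ciInf_le (hbdd x) z
    have h2 : |x - (z : ℝ)| ^ α ≤ |x - y| ^ α + |y - (z : ℝ)| ^ α :=
      (rpow_le_rpow (abs_nonneg _) (abs_sub_le x y z) hα.le).trans
        (rpow_add_le_add_rpow (abs_nonneg _) (abs_nonneg _) hα.le hα')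
    have h3 := mul_le_mul_of_nonneg_left h2 hC
    linarith
  refine ⟨fun x => ⨅ z : S, u z + C * |x - (z : ℝ)| ^ α, fun x y => ?_, fun x hx => ?_⟩
  · simp only [abs_le]
    have h1 := hle x y
    have h2 := hle y x
    rw [abs_sub_comm] at h2
    constructor <;> linarith
  · refine le_antisymm (le_ciInf fun z => ?_) ?_
    · linarith [hu x hx z z.2]
    · have := ciInf_le (hbdd x) ⟨x, hx⟩
      simpa [zero_rpow hα.ne'] using this

/-- an a.e. limit of solutions of the regularized equations with vanishing
viscosities, bounded by `1`, agrees a.e. with a `C^α` function. -/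
theorem holder_regularity_of_limit :
    ∃ α C : ℝ, 0 < α ∧ α < 1 / 2 ∧ 0 < C ∧
      ∀ s : ℝ, (1 - α) / 2 < s → s < 1 / 2 →
        ∀ ε : ℕ → ℝ, (∀ n, 0 < ε n) → Tendsto ε atTop (nhds 0) →
          ∀ θ : ℕ → ℝ → ℝ → ℝ,
            (∀ n, IsClassicalSolution s (ε n) (θ n)
              (Set.univ ×ˢ Set.Icc (-1 : ℝ) 0)) →
            (∀ n, ∀ x : ℝ, ∀ t ∈ Set.Icc (-1 : ℝ) 0, |θ n x t| ≤ 1) →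
            ∀ u : ℝ → ℝ,
              (∀ᵐ x : ℝ ∂volume, Tendsto (fun n => θ n x 0) atTop (nhds (u x))) →
              ∃ v : ℝ → ℝ,
                (∀ x y : ℝ, |v x - v y| ≤ C * |x - y| ^ α) ∧
                ∀ᵐ x : ℝ ∂volume, u x = v x := by
  obtain ⟨c, η, hc, hη, hfrac⟩ := fracC_lower_bound
  obtain ⟨α, hα, hα1, hα2, hα3⟩ : ∃ α : ℝ, 0 < α ∧ α ≤ 1 / 16 ∧ α ≤ c / 8 ∧ α ≤ η :=
    ⟨min (1 / 16) (min (c / 8) η), by positivity, min_le_left _ _,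
      (min_le_right _ _).trans (min_le_left _ _), (min_le_right _ _).trans (min_le_right _ _)⟩
  refine ⟨α, 2, hα, by linarith, by norm_num, ?_⟩
  intro s hs₁ hs₂ ε hε _ θ hsol hbd u hu
  have hz : (0 : ℝ) ∈ Icc (-1 : ℝ) 0 := ⟨by norm_num, le_rfl⟩
  have hθ : ∀ n x y, θ n x 0 - θ n y 0 ≤ 2 * |x - y| ^ α := by
    intro n x y
    have hlim : Tendsto (fun ρ : ℝ => 2 * (|x - y| + (ρ - 0) ^ (1 / (2 * s))) ^ α)
        (nhdsWithin 0 (Ioi 0)) (nhds (2 * |x - y| ^ α)) := by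
      have hcont : Continuous fun ρ : ℝ => 2 * (|x - y| + (ρ - 0) ^ (1 / (2 * s))) ^ α := by
        refine continuous_const.mul (Continuous.rpow_const (continuous_const.add ?_)
          fun _ => Or.inr hα.le)
        exact Continuous.rpow_const (by fun_prop)
          fun _ => Or.inr (div_nonneg zero_le_one (by linarith))
      have hexp : 1 / (2 * s) ≠ 0 := one_div_ne_zero (by linarith)
      have := (hcont.tendsto 0).mono_left (nhdsWithin_le_nhds (s := Ioi (0 : ℝ)))
      simpa only [sub_zero, zero_rpow hexp, add_zero] using this
    refine ge_of_tendsto hlim ?_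
    filter_upwards [self_mem_nhdsWithin] with ρ hρ
    exact (hsol n).modulus_comparison hα hs₂ (by linarith) (by linarith)
      (by linarith [hfrac s (by linarith) hs₂]) (hε n) hρ (hbd n) x y 0 hz
  set S : Set ℝ := {x | Tendsto (fun n => θ n x 0) atTop (nhds (u x))} with hS
  have hSne : S.Nonempty := Filter.Eventually.exists hu
  obtain ⟨v, hv, huv⟩ := exists_holder_extension (u := u) (S := S) (B := -1) hSne
    (show (0 : ℝ) ≤ 2 by norm_num) hα (by linarith)
    (fun x hx => ge_of_tendsto' hx fun n => (abs_le.1 (hbd n x 0 hz)).1)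
    (fun x hx y hy => le_of_tendsto' (hx.sub hy) fun n => hθ n x y)
  refine ⟨v, hv, ?_⟩
  filter_upwards [hu] with x hx using huv x hx
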